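/- Let f = p/q be a rational function of two real variables bounded near (x₀,y₀), and let Φ be a function of type (i). Then q(x, y₀+Φ(x−x₀)) ≠ 0 for all x ≠ x₀ sufficiently close to x₀, and both one-sided limits lim_{x→x₀⁺} f(x, y₀+Φ(x−x₀)) and lim_{x→x₀⁻} f(x, y₀+Φ(x−x₀)) exist and are finite. -/

import Mathlib

open MvPolynomial Filter Topology

/-- Evaluation of a two-variable real polynomial at a point of `ℝ²`. -/
noncomputable def pev (p : MvPolynomial (Fin 2) ℝ) (v : ℝ × ℝ) : ℝ :=
  MvPolynomial.eval ![v.1, v.2] p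

/-- `p/q` is bounded near `v₀`. -/
def BoundedNear (p q : MvPolynomial (Fin 2) ℝ) (v₀ : ℝ × ℝ) : Prop :=
  ∃ U ∈ nhds v₀, ∃ M : ℝ, ∀ v ∈ U, pev q v ≠ 0 → |pev p v / pev q v| ≤ M

/-- `Φ` is a function of type (i). -/
def TypeI (Φ : ℝ → ℝ) : Prop :=
  ∃ (N : ℕ) (φ : Fin N → ℝ) (e : Fin N → ℚ),
    (∀ k, φ k ≠ 0) ∧ StrictMono e ∧ (∀ k, 1 ≤ e k) ∧
    ∀ t : ℝ, Φ t = ∑ k, φ k * |t| ^ ((e k : ℝ))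

/-!
Eliminating either variable between the coprime polynomials `p` and `q` (over the fraction field
of the polynomials in the other variable they generate the unit ideal) leaves nonzero polynomials
in one variable, so `p` and `q` have only finitely many common zeros. Boundedness gives
`|p| ≤ M |q|` near the point, by density of `{q ≠ 0}`; hence a zero of `q` there is a common zero
and `q` has no zero in a punctured neighbourhood.

On one side of `x₀`, the parameter `s = |x - x₀| ^ (1 / n)`, with `n` a common denominator of the
exponents, turns the curve into an analytic one. Along it `p / q` is a bounded meromorphic function
of `s`, and such a function has a limit at `0`.
-/

section Elimination

variable {R : Type*} [CommRing R] [IsDomain R]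

section FractionField

variable [IsGCDMonoid R] {K : Type*} [Field K] [Algebra R K] [IsFractionRing R K]

theorem exists_isPrimitive_associated_map {f : Polynomial K} (hf : f ≠ 0) :
    ∃ g : Polynomial R, g.IsPrimitive ∧ Associated (g.map (algebraMap R K)) f := by
  let : NormalizedGCDMonoid R := Nonempty.some inferInstance
  obtain ⟨b, hb, hbf⟩ := IsLocalization.integerNormalization_spec (nonZeroDivisors R) f
  set F := IsLocalization.integerNormalization (nonZeroDivisors R) f
  have hF : F ≠ 0 := mt IsFractionRing.integerNormalization_eq_zero_iff.1 hf
  have isUnit_C {r : R} (hr : r ≠ 0) : IsUnit (Polynomial.C (algebraMap R K r)) :=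
    Polynomial.isUnit_C.2 (IsUnit.mk0 _ (by simpa using hr))
  have hprim : Associated (F.primPart.map (algebraMap R K)) (F.map (algebraMap R K)) := by
    conv_rhs => rw [F.eq_C_content_mul_primPart, Polynomial.map_mul, Polynomial.map_C]
    exact (associated_unit_mul_left _ _ (isUnit_C (mt F.content_eq_zero_iff.1 hF))).symm
  refine ⟨F.primPart, F.isPrimitive_primPart, hprim.trans ?_⟩
  rw [hbf, Algebra.smul_def, Polynomial.algebraMap_apply]
  exact associated_unit_mul_left _ _ (isUnit_C (nonZeroDivisors.ne_zero hb))

variable (K) in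
theorem isCoprime_map_algebraMap_of_isRelPrime {P Q : Polynomial R} (h : IsRelPrime P Q) :
    IsCoprime (P.map (algebraMap R K)) (Q.map (algebraMap R K)) := by
  refine IsRelPrime.isCoprime fun d hdP hdQ => ?_
  have hinj := Polynomial.map_injective _ (IsFractionRing.injective R K)
  have hd : d ≠ 0 := by
    rintro rfl
    have hP : P = 0 := hinj (by simpa using hdP)
    have hQ : Q = 0 := hinj (by simpa using hdQ)
    exact not_isUnit_zero (h (hP ▸ dvd_rfl) (hQ ▸ dvd_rfl))
  obtain ⟨g, hg, hgd⟩ := exists_isPrimitive_associated_map (R := R) hd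
  have hgu : IsUnit g := h (hg.dvd_of_fraction_map_dvd_fraction_map (hgd.dvd.trans hdP))
    (hg.dvd_of_fraction_map_dvd_fraction_map (hgd.dvd.trans hdQ))
  exact hgd.isUnit (hgu.map (Polynomial.mapRingHom (algebraMap R K)))

end FractionField

attribute [local instance] Polynomial.algebra Polynomial.isLocalization in
theorem exists_C_mem_span_pair_of_isRelPrime [IsGCDMonoid R] {P Q : Polynomial R}
    (h : IsRelPrime P Q) : ∃ c : R, c ≠ 0 ∧ Polynomial.C c ∈ Ideal.span {P, Q} := by
  let K := FractionRing R
  have htop : (Ideal.span {P, Q}).map (algebraMap (Polynomial R) (Polynomial K)) = ⊤ := by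
    rw [Ideal.map_span, Set.image_pair, Ideal.eq_top_iff_one]
    exact Ideal.mem_span_pair.2 (isCoprime_map_algebraMap_of_isRelPrime K h)
  have hmeet := mt (IsLocalization.map_algebraMap_ne_top_iff_disjoint
    ((nonZeroDivisors R).map Polynomial.C) (Polynomial K) (Ideal.span {P, Q})).2 (not_not.2 htop)
  obtain ⟨_, ⟨c, hc, rfl⟩, hcPQ⟩ := Set.not_disjoint_iff.1 hmeet
  exact ⟨c, nonZeroDivisors.ne_zero hc, hcPQ⟩

theorem exists_rename_succAbove_mem_span_pair_of_isRelPrime [UniqueFactorizationMonoid R] {n : ℕ}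
    {p q : MvPolynomial (Fin (n + 1)) R} (h : IsRelPrime p q) (i : Fin (n + 1)) :
    ∃ c : MvPolynomial (Fin n) R, c ≠ 0 ∧ rename i.succAbove c ∈ Ideal.span {p, q} := by
  let e : MvPolynomial (Fin (n + 1)) R ≃ₐ[R] Polynomial (MvPolynomial (Fin n) R) :=
    (renameEquiv R (finSuccEquiv' i)).trans (optionEquivLeft R (Fin n))
  have he (c : MvPolynomial (Fin n) R) : e.symm (Polynomial.C c) = rename i.succAbove c := by
    rw [AlgEquiv.symm_apply_eq]
    induction c using MvPolynomial.induction_on with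
    | C a => simp [e]
    | add a b ha hb => simp only [map_add, ha, hb]
    | mul_X a j ha => simp [ha, e]
  obtain ⟨c, hc, hmem⟩ := exists_C_mem_span_pair_of_isRelPrime
    (P := e p) (Q := e q) (IsRelPrime.of_map e.symm (by simpa using h))
  refine ⟨c, hc, ?_⟩
  simpa [Ideal.map_span, Set.image_pair, he] using Ideal.mem_map_of_mem e.symm hmem

theorem finite_setOf_eval_const_eq_zero {σ : Type*} [Unique σ] {c : MvPolynomial σ R}
    (hc : c ≠ 0) : {x : R | eval (fun _ => x) c = 0}.Finite := by
  by_contra hinf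
  refine hc (funext_set _ (fun _ => hinf) fun v hv => ?_)
  rw [map_zero, ← hv default trivial]
  exact congrArg (eval · c) (funext fun j => congrArg v (Subsingleton.elim j default))

theorem finite_setOf_eval_eq_zero_and_eval_eq_zero [UniqueFactorizationMonoid R]
    {p q : MvPolynomial (Fin 2) R} (h : IsRelPrime p q) :
    {v | eval v p = 0 ∧ eval v q = 0}.Finite := by
  choose c hc hmem using exists_rename_succAbove_mem_span_pair_of_isRelPrime h
  refine (Set.Finite.pi' fun j : Fin 2 => finite_setOf_eval_const_eq_zero (hc j.rev)).subset
    fun v ⟨hp, hq⟩ j => ?_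
  obtain ⟨a, b, hab⟩ := Ideal.mem_span_pair.1 (hmem j.rev)
  have hcv : eval (v ∘ j.rev.succAbove) (c j.rev) = 0 := by
    rw [← eval_rename, ← hab, map_add, map_mul, map_mul, hp, hq, mul_zero, mul_zero, add_zero]
  have hv : v ∘ j.rev.succAbove = fun _ => v j := by
    funext k
    fin_cases j <;> fin_cases k <;> rfl
  rwa [hv] at hcv

end Elimination

theorem dense_setOf_eval_ne_zero {σ R : Type*} [CommRing R] [IsDomain R]
    [TopologicalSpace R] [T1Space R] [PerfectSpace R] {q : MvPolynomial σ R} (hq : q ≠ 0) :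
    Dense {v : σ → R | eval v q ≠ 0} := by
  refine dense_iff_inter_open.2 fun U hU ⟨v, hv⟩ => ?_
  obtain ⟨I, t, ht, htU⟩ := Filter.mem_pi'.1 (nhds_pi (a := v) ▸ hU.mem_nhds hv)
  by_contra! hne
  refine hq (funext_set t (fun i => infinite_of_mem_nhds (v i) (ht i)) fun w hw => ?_)
  by_contra hwq
  exact hne.subset ⟨htU fun i _ => hw i trivial, by simpa using hwq⟩

theorem exists_tendsto_of_isBoundedUnder_norm {𝕜 E : Type*} [NontriviallyNormedField 𝕜]
    [NormedAddCommGroup E] [NormedSpace 𝕜 E] {f : 𝕜 → E} {x : 𝕜} (hf : MeromorphicAt f x)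
    (hb : IsBoundedUnder (· ≤ ·) (𝓝[≠] x) (‖f ·‖)) : ∃ L, Tendsto f (𝓝[≠] x) (𝓝 L) := by
  rw [tendsto_nhds_iff_meromorphicOrderAt_nonneg hf, ← not_lt,
    ← tendsto_cobounded_iff_meromorphicOrderAt_neg hf, ← tendsto_norm_atTop_iff_cobounded]
  exact fun h => not_isBoundedUnder_of_tendsto_atTop h hb

theorem continuous_pev (p : MvPolynomial (Fin 2) ℝ) : Continuous (pev p) :=
  p.continuous_eval.comp (Homeomorph.finTwoArrow (X := ℝ)).symm.continuous

theorem analyticAt_pev_comp {p : MvPolynomial (Fin 2) ℝ} {γ : ℝ → ℝ × ℝ} {s₀ : ℝ}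
    (hγ : AnalyticAt ℝ γ s₀) : AnalyticAt ℝ (fun s => pev p (γ s)) s₀ := by
  refine AnalyticAt.aeval_mvPolynomial (f := fun s => ![(γ s).1, (γ s).2]) (fun i => ?_) p
  fin_cases i
  exacts [analyticAt_fst.comp hγ, analyticAt_snd.comp hγ]

theorem dense_setOf_pev_ne_zero {q : MvPolynomial (Fin 2) ℝ} (hq : q ≠ 0) :
    Dense {v | pev q v ≠ 0} :=
  (dense_setOf_eval_ne_zero hq).preimage (Homeomorph.finTwoArrow (X := ℝ)).symm.isOpenMap

theorem eventually_pev_ne_zero_or_pev_ne_zero {p q : MvPolynomial (Fin 2) ℝ} (h : IsRelPrime p q)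
    (v₀ : ℝ × ℝ) : ∀ᶠ v in 𝓝[≠] v₀, pev p v ≠ 0 ∨ pev q v ≠ 0 := by
  have hfin : {v | pev p v = 0 ∧ pev q v = 0}.Finite :=
    (finite_setOf_eval_eq_zero_and_eval_eq_zero h).preimage
      (Homeomorph.finTwoArrow (X := ℝ)).symm.injective.injOn
  filter_upwards [nhdsNE_of_nhdsNE_sdiff_finite univ_mem hfin] with v hv
  exact not_and_or.1 hv.2

theorem BoundedNear.exists_eventually_abs_pev_le {p q : MvPolynomial (Fin 2) ℝ} {v₀ : ℝ × ℝ}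
    (hb : BoundedNear p q v₀) (hq : q ≠ 0) :
    ∃ M, ∀ᶠ v in 𝓝 v₀, |pev p v| ≤ M * |pev q v| := by
  obtain ⟨U, hU, M, hM⟩ := hb
  obtain ⟨V, hVU, hV, hv₀⟩ := mem_nhds_iff.1 hU
  have hclosed : IsClosed {v | |pev p v| ≤ M * |pev q v|} :=
    isClosed_le (continuous_pev p).abs (continuous_const.mul (continuous_pev q).abs)
  have hsub : V ∩ {v | pev q v ≠ 0} ⊆ {v | |pev p v| ≤ M * |pev q v|} := by
    rintro v ⟨hvV, hvq⟩
    have hv := hM v (hVU hvV) hvq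
    rwa [abs_div, div_le_iff₀ (abs_pos.2 hvq)] at hv
  exact ⟨M, mem_of_superset (hV.mem_nhds hv₀)
    (((dense_setOf_pev_ne_zero hq).open_subset_closure_inter hV).trans
      (hclosed.closure_subset_iff.2 hsub))⟩

section AnalyticCurve

variable {p q : MvPolynomial (Fin 2) ℝ} {γ : ℝ → ℝ × ℝ} {s₀ : ℝ}

theorem BoundedNear.eventually_pev_comp_ne_zero (hb : BoundedNear p q (γ s₀)) (hq : q ≠ 0)
    (hcop : IsRelPrime p q) (hγ : ContinuousAt γ s₀) (hne : ∀ᶠ s in 𝓝[≠] s₀, γ s ≠ γ s₀) :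
    ∀ᶠ s in 𝓝[≠] s₀, pev q (γ s) ≠ 0 := by
  obtain ⟨M, hM⟩ := hb.exists_eventually_abs_pev_le hq
  have hγ' : Tendsto γ (𝓝[≠] s₀) (𝓝[≠] (γ s₀)) :=
    tendsto_nhdsWithin_iff.2 ⟨hγ.tendsto.mono_left nhdsWithin_le_nhds, hne⟩
  filter_upwards [hγ'.eventually (hM.filter_mono nhdsWithin_le_nhds),
    hγ'.eventually (eventually_pev_ne_zero_or_pev_ne_zero hcop _)] with s hle hpq hqs
  exact hpq.elim (fun hps => hps (by simpa [hqs] using hle)) (· hqs)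

theorem BoundedNear.exists_tendsto_pev_div_pev_comp (hb : BoundedNear p q (γ s₀))
    (hγ : AnalyticAt ℝ γ s₀) (hne : ∀ᶠ s in 𝓝[≠] s₀, pev q (γ s) ≠ 0) :
    ∃ L, Tendsto (fun s => pev p (γ s) / pev q (γ s)) (𝓝[≠] s₀) (𝓝 L) := by
  obtain ⟨U, hU, M, hM⟩ := hb
  have hγU : ∀ᶠ s in 𝓝[≠] s₀, γ s ∈ U := nhdsWithin_le_nhds (hγ.continuousAt hU)
  refine exists_tendsto_of_isBoundedUnder_norm
    ((analyticAt_pev_comp hγ).meromorphicAt.div (analyticAt_pev_comp hγ).meromorphicAt)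
    ⟨M, eventually_map.2 ?_⟩
  filter_upwards [hne, hγU] with s hqs hs
  exact hM _ hs hqs

end AnalyticCurve

/-- `Φ` is, to the right of `0`, a convergent Puiseux series without constant term,
`Φ t = ∑_{j ≥ 1} a_j t ^ (j / n)`. This is encoded without roots, as the analyticity of
`s ↦ Φ (s ^ n)` in `s = t ^ (1 / n)`. -/
def IsPuiseuxRight (Φ : ℝ → ℝ) : Prop :=
  ∃ n ≠ 0, ∃ g : ℝ → ℝ, AnalyticAt ℝ g 0 ∧ g 0 = 0 ∧ ∀ᶠ s in 𝓝[>] 0, Φ (s ^ n) = g s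

theorem map_pow_nhdsGT_zero {n : ℕ} (hn : n ≠ 0) :
    map (fun s : ℝ => s ^ n) (𝓝[>] 0) = 𝓝[>] 0 := by
  refine le_antisymm ?_ ?_
  · refine tendsto_nhdsWithin_iff.2 ⟨?_, eventually_mem_nhdsWithin.mono fun s hs =>
      Set.mem_Ioi.2 (pow_pos (Set.mem_Ioi.1 hs) n)⟩
    exact ((continuous_pow n).tendsto' 0 0 (zero_pow hn)).mono_left nhdsWithin_le_nhds
  · have hn' : (0 : ℝ) < (n : ℝ)⁻¹ := by positivity
    have hroot : Tendsto (fun t : ℝ => t ^ (n : ℝ)⁻¹) (𝓝[>] 0) (𝓝[>] 0) := by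
      refine tendsto_nhdsWithin_iff.2
        ⟨?_, eventually_mem_nhdsWithin.mono fun t ht => Real.rpow_pos_of_pos ht _⟩
      exact ((Real.continuous_rpow_const hn'.le).tendsto' 0 0 (Real.zero_rpow hn'.ne')).mono_left
        nhdsWithin_le_nhds
    calc 𝓝[>] (0 : ℝ)
        = map (fun s : ℝ => s ^ n) (map (fun t : ℝ => t ^ (n : ℝ)⁻¹) (𝓝[>] 0)) := by
          rw [Filter.map_map]
          refine Filter.map_id.symm.trans (Filter.map_congr ?_)
          filter_upwards [self_mem_nhdsWithin] with t ht
          exact (Real.rpow_inv_natCast_pow (Set.mem_Ioi.1 ht).le hn).symm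
      _ ≤ map (fun s : ℝ => s ^ n) (𝓝[>] 0) := Filter.map_mono hroot

namespace IsPuiseuxRight

theorem zero : IsPuiseuxRight 0 :=
  ⟨1, one_ne_zero, 0, analyticAt_const, rfl, by simp⟩

theorem add {Φ Ψ : ℝ → ℝ} (hΦ : IsPuiseuxRight Φ) (hΨ : IsPuiseuxRight Ψ) :
    IsPuiseuxRight (Φ + Ψ) := by
  obtain ⟨m, hm, g, hg, hg0, hΦg⟩ := hΦ
  obtain ⟨n, hn, h, hh, hh0, hΨh⟩ := hΨ
  have comp_pow {f : ℝ → ℝ} (hf : AnalyticAt ℝ f 0) {k : ℕ} (hk : k ≠ 0) :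
      AnalyticAt ℝ (fun s => f (s ^ k)) 0 :=
    AnalyticAt.comp_of_eq hf (by fun_prop) (zero_pow hk)
  rw [← map_pow_nhdsGT_zero hn] at hΦg
  rw [← map_pow_nhdsGT_zero hm] at hΨh
  refine ⟨m * n, mul_ne_zero hm hn, fun s => g (s ^ n) + h (s ^ m),
    (comp_pow hg hn).add (comp_pow hh hm), by simp [hm, hn, hg0, hh0], ?_⟩
  filter_upwards [eventually_map.1 hΦg, eventually_map.1 hΨh] with s hsg hsh
  rw [Pi.add_apply, ← hsg, ← hsh, ← pow_mul, ← pow_mul, mul_comm n m]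

theorem sum {ι : Type*} {Φ : ι → ℝ → ℝ} {I : Finset ι} (h : ∀ i ∈ I, IsPuiseuxRight (Φ i)) :
    IsPuiseuxRight (∑ i ∈ I, Φ i) :=
  Finset.sum_induction Φ IsPuiseuxRight (fun _ _ => add) zero h

theorem const_mul_abs_rpow (c : ℝ) {e : ℚ} (he : 0 < e) :
    IsPuiseuxRight fun t => c * |t| ^ (e : ℝ) := by
  have hnum : (e.den : ℝ) * e = e.num.toNat := by
    have hcast : ((e.num.toNat : ℤ) : ℚ) = e.num := by
      rw [Int.toNat_of_nonneg (Rat.num_pos.2 he).le]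
    exact_mod_cast (Rat.den_mul_eq_num e).trans hcast.symm
  have hnum0 : e.num.toNat ≠ 0 := by simpa using he
  refine ⟨e.den, e.den_ne_zero, fun s => c * s ^ e.num.toNat, by fun_prop, by simp [hnum0], ?_⟩
  filter_upwards [self_mem_nhdsWithin] with s hs
  have hs0 : 0 ≤ s := (Set.mem_Ioi.1 hs).le
  rw [abs_of_nonneg (pow_nonneg hs0 _), ← Real.rpow_natCast, ← Real.rpow_mul hs0, hnum,
    Real.rpow_natCast]

end IsPuiseuxRight

theorem TypeI.isPuiseuxRight {Φ : ℝ → ℝ} (hΦ : TypeI Φ) : IsPuiseuxRight Φ := by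
  obtain ⟨N, φ, e, -, -, he, hΦe⟩ := hΦ
  have hsum : Φ = ∑ k, fun t => φ k * |t| ^ (e k : ℝ) := by
    funext t
    rw [hΦe, Finset.sum_apply]
  exact hsum ▸ IsPuiseuxRight.sum fun k _ =>
    IsPuiseuxRight.const_mul_abs_rpow (φ k) (zero_lt_one.trans_le (he k))

theorem TypeI.even {Φ : ℝ → ℝ} (hΦ : TypeI Φ) : Function.Even Φ := by
  obtain ⟨N, φ, e, -, -, -, hΦe⟩ := hΦ
  intro t
  simp only [hΦe, abs_neg]

theorem IsPuiseuxRight.eventually_pev_ne_zero_and_exists_tendsto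
    {p q : MvPolynomial (Fin 2) ℝ} (hq : q ≠ 0) (hcop : IsRelPrime p q) {x₀ y₀ : ℝ}
    (hb : BoundedNear p q (x₀, y₀)) {Ψ : ℝ → ℝ} (hΨ : IsPuiseuxRight Ψ) {ε : ℝ} (hε : ε ≠ 0) :
    (∀ᶠ t in 𝓝[>] 0, pev q (x₀ + ε * t, y₀ + Ψ t) ≠ 0) ∧
    ∃ L, Tendsto (fun t => pev p (x₀ + ε * t, y₀ + Ψ t) / pev q (x₀ + ε * t, y₀ + Ψ t))
      (𝓝[>] 0) (𝓝 L) := by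
  obtain ⟨n, hn, g, hg, hg0, hΨg⟩ := hΨ
  set γ : ℝ → ℝ × ℝ := fun s => (x₀ + ε * s ^ n, y₀ + g s)
  have hγ : AnalyticAt ℝ γ 0 := by fun_prop
  have hγ0 : γ 0 = (x₀, y₀) := by simp [γ, hn, hg0]
  have hγne : ∀ᶠ s in 𝓝[≠] 0, γ s ≠ γ 0 := by
    filter_upwards [self_mem_nhdsWithin] with s hs
    exact fun h => hs (by simpa [γ, hn, hε] using congrArg Prod.fst h)
  rw [← hγ0] at hb
  have hqγ := hb.eventually_pev_comp_ne_zero hq hcop hγ.continuousAt hγne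
  obtain ⟨L, hL⟩ := hb.exists_tendsto_pev_div_pev_comp hγ hqγ
  have hle : 𝓝[>] (0 : ℝ) ≤ 𝓝[≠] 0 := nhdsGT_le_nhdsNE 0
  rw [← map_pow_nhdsGT_zero hn, eventually_map]
  refine ⟨?_, L, tendsto_map'_iff.2 ((hL.mono_left hle).congr' ?_)⟩
  · filter_upwards [hΨg, hle hqγ] with s hs hqs
    rwa [hs]
  · filter_upwards [hΨg] with s hs
    simp only [Function.comp_apply, hs, γ]

theorem typeI_curve_limits_general (p q : MvPolynomial (Fin 2) ℝ) (hq : q ≠ 0)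
    (hcop : IsRelPrime p q) (x₀ y₀ : ℝ) (hb : BoundedNear p q (x₀, y₀)) (Φ : ℝ → ℝ)
    (hΦ : IsPuiseuxRight Φ) (hΦneg : IsPuiseuxRight fun t => Φ (-t)) :
    (∀ᶠ x in 𝓝[≠] x₀, pev q (x, y₀ + Φ (x - x₀)) ≠ 0) ∧
    (∃ L : ℝ, Tendsto
      (fun x => pev p (x, y₀ + Φ (x - x₀)) / pev q (x, y₀ + Φ (x - x₀)))
      (𝓝[>] x₀) (𝓝 L)) ∧
    (∃ L : ℝ, Tendsto
      (fun x => pev p (x, y₀ + Φ (x - x₀)) / pev q (x, y₀ + Φ (x - x₀)))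
      (𝓝[<] x₀) (𝓝 L)) := by
  have hright : Tendsto (fun x => x - x₀) (𝓝[>] x₀) (𝓝[>] 0) :=
    tendsto_nhdsWithin_iff.2 ⟨((continuous_sub_right x₀).tendsto' x₀ 0 (sub_self _)).mono_left
      nhdsWithin_le_nhds, eventually_mem_nhdsWithin.mono fun x hx =>
        Set.mem_Ioi.2 (sub_pos.2 (Set.mem_Ioi.1 hx))⟩
  have hleft : Tendsto (fun x => x₀ - x) (𝓝[<] x₀) (𝓝[>] 0) :=
    tendsto_nhdsWithin_iff.2 ⟨((continuous_sub_left x₀).tendsto' x₀ 0 (sub_self _)).mono_left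
      nhdsWithin_le_nhds, eventually_mem_nhdsWithin.mono fun x hx =>
        Set.mem_Ioi.2 (sub_pos.2 (Set.mem_Iio.1 hx))⟩
  obtain ⟨hneR, L, hL⟩ := hΦ.eventually_pev_ne_zero_and_exists_tendsto hq hcop hb one_ne_zero
  obtain ⟨hneL, L', hL'⟩ :=
    hΦneg.eventually_pev_ne_zero_and_exists_tendsto hq hcop hb (neg_ne_zero.2 one_ne_zero)
  refine ⟨?_, ⟨L, by simpa [Function.comp_def] using hL.comp hright⟩,
    ⟨L', by simpa [Function.comp_def] using hL'.comp hleft⟩⟩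
  rw [← nhdsLT_sup_nhdsGT, eventually_sup]
  exact ⟨by simpa using hleft.eventually hneL, by simpa using hright.eventually hneR⟩

/-- Along a type (i) curve through `(x₀,y₀)`, the denominator is eventually nonzero and
the one-sided limits of a rational function bounded near `(x₀,y₀)` exist and are finite. -/
theorem typeI_curve_limits (p q : MvPolynomial (Fin 2) ℝ) (hq : q ≠ 0)
    (hcop : ∀ d : MvPolynomial (Fin 2) ℝ, d ∣ p → d ∣ q → IsUnit d) (x₀ y₀ : ℝ)
    (hb : BoundedNear p q (x₀, y₀)) (Φ : ℝ → ℝ) (hΦ : TypeI Φ) :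
    (∀ᶠ x in 𝓝[≠] x₀, pev q (x, y₀ + Φ (x - x₀)) ≠ 0) ∧
    (∃ L : ℝ, Tendsto
      (fun x => pev p (x, y₀ + Φ (x - x₀)) / pev q (x, y₀ + Φ (x - x₀)))
      (𝓝[>] x₀) (𝓝 L)) ∧
    (∃ L : ℝ, Tendsto
      (fun x => pev p (x, y₀ + Φ (x - x₀)) / pev q (x, y₀ + Φ (x - x₀)))
      (𝓝[<] x₀) (𝓝 L)) :=
  typeI_curve_limits_general p q hq (fun d => hcop d) x₀ y₀ hb Φ hΦ.isPuiseuxRight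
    (by simpa only [hΦ.even _] using hΦ.isPuiseuxRight)
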